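/- Let b > τ > 0 and α ≠ 0 be real numbers, and fix σ ∈ {1, −1}. For λ > 0 define the complex polynomial P_λ(s) = (s² + λ)·(τ s³ + s² + b λ s + λ) − α²·(1 + τ s). Then there exist constants C > 0 and Λ > 0 such that for every λ ≥ Λ there exists a root s ∈ ℂ of P_λ with |Re s + α²/(2(b−τ)λ²)| ≤ C·λ^{−5/2} and Re s < 0. In particular, along any sequence λ_k → ∞ these roots satisfy Re s_k → 0 with Re s_k < 0, so the real parts of the wave-branch roots approach the imaginary axis at rate λ_k^{−2}. -/

import Mathlib

/-!
Put `λ = w²`. At `iw` the factor `s² + λ` of `P_λ` vanishes, so `P_λ(iw) = -α² (1 + iτw) = O(w)`,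
whereas `P_λ'(iw) = -(2 (b - τ) w⁴ + α² τ)`. As `P' / P` is the sum of `1 / (s - r)` over the roots
`r`, some root lies within `deg P · |P / P'| = O(w⁻³)` of `iw`. At such a root `iw + d` the
quadratic Taylor remainder is `O(w³ |d|²) = O(w⁻³)`, hence
`2 (b - τ) w⁴ d + α² (1 + iτw) = O(w⁻³)`. The large term `iτw` is imaginary, so the real part gives
`Re d = -α² / (2 (b - τ) w⁴) + O(w⁻⁷)`. The choice `w = σ√λ` selects the branch near `iσ√λ`.
-/

open Asymptotics Bornology Filter Polynomial
open Complex (I)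

theorem exists_isRoot_norm_sub_mul_le {K : Type*} [NormedField K] {p : K[X]}
    (hp : p.Splits) (hdeg : p.natDegree ≠ 0) (z : K) :
    ∃ r, p.IsRoot r ∧ ‖z - r‖ * ‖p.derivative.eval z‖ ≤ p.natDegree * ‖p.eval z‖ := by
  classical
  by_cases hz : p.eval z = 0
  · exact ⟨z, hz, by simp [hz]⟩
  have hp0 : p ≠ 0 := by rintro rfl; simp at hdeg
  have hroots : p.roots.toFinset.Nonempty := by
    rwa [Multiset.toFinset_nonempty, ← Multiset.card_eq_zero.ne, ← hp.natDegree_eq_card_roots]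
  obtain ⟨r, hr, hnearest⟩ := p.roots.toFinset.exists_min_image (‖z - ·‖) hroots
  have hrroot : p.IsRoot r := (mem_roots hp0).mp (Multiset.mem_toFinset.mp hr)
  have hzr : 0 < ‖z - r‖ := norm_pos_iff.mpr (sub_ne_zero.mpr fun h ↦ hz (h ▸ hrroot))
  refine ⟨r, hrroot, ?_⟩
  have hterm : ∀ x ∈ p.roots.map (fun a ↦ ‖1 / (z - a)‖), x ≤ 1 / ‖z - r‖ := by
    simp only [Multiset.mem_map, forall_exists_index, and_imp, forall_apply_eq_imp_iff₂, norm_div,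
      norm_one]
    exact fun a ha ↦ one_div_le_one_div_of_le hzr (hnearest a (Multiset.mem_toFinset.mpr ha))
  have hquot : ‖p.derivative.eval z‖ / ‖p.eval z‖ ≤ p.natDegree / ‖z - r‖ :=
    calc ‖p.derivative.eval z‖ / ‖p.eval z‖ = ‖(p.roots.map fun a ↦ 1 / (z - a)).sum‖ := by
          rw [← norm_div, hp.eval_derivative_div_eval_of_ne_zero hz]
      _ ≤ (p.roots.map fun a ↦ ‖1 / (z - a)‖).sum := by
          simpa only [Multiset.map_map] using!
            norm_multiset_sum_le (p.roots.map fun a ↦ 1 / (z - a))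
      _ ≤ p.roots.card • (1 / ‖z - r‖) := by
          simpa only [Multiset.card_map] using Multiset.sum_le_card_nsmul _ _ hterm
      _ = p.natDegree / ‖z - r‖ := by
          rw [hp.natDegree_eq_card_roots, nsmul_eq_mul, mul_one_div]
  rwa [div_le_div_iff₀ (norm_pos_iff.mpr hz) hzr, mul_comm] at hquot

theorem exists_isRoot_sub_isBigO_eval_div_eval_derivative {ι K : Type*} [NormedField K]
    {l : Filter ι} {p : ι → K[X]} {n : ℕ} (hp : ∀ i, (p i).Splits) (hn : ∀ i, (p i).natDegree ≤ n)
    {z : ι → K} (hz : ∀ᶠ i in l, (p i).derivative.eval (z i) ≠ 0) :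
    ∃ r : ι → K, (∀ᶠ i in l, (p i).IsRoot (r i)) ∧
      (fun i ↦ r i - z i) =O[l] fun i ↦ (p i).eval (z i) / (p i).derivative.eval (z i) := by
  have hpointwise : ∀ i, ∃ r, (p i).derivative.eval (z i) ≠ 0 → (p i).IsRoot r ∧
      ‖z i - r‖ * ‖(p i).derivative.eval (z i)‖ ≤ (p i).natDegree * ‖(p i).eval (z i)‖ := by
    intro i
    by_cases hdeg : (p i).natDegree = 0
    · exact ⟨0, fun h ↦ absurd (by rw [derivative_of_natDegree_zero hdeg, eval_zero]) h⟩
    · obtain ⟨r, hr⟩ := exists_isRoot_norm_sub_mul_le (hp i) hdeg (z i)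
      exact ⟨r, fun _ ↦ hr⟩
  choose r hr using hpointwise
  refine ⟨r, hz.mono fun i hi ↦ (hr i hi).1, .of_bound n (hz.mono fun i hi ↦ ?_)⟩
  rw [norm_sub_rev, norm_div, ← mul_div_assoc, le_div_iff₀ (norm_pos_iff.mpr hi)]
  exact (hr i hi).2.trans (by gcongr; exact hn i)

theorem ofReal_pow_isBigO_pow_cobounded {m n : ℕ} (hmn : m ≤ n) :
    (fun w : ℝ ↦ (w : ℂ) ^ m) =O[cobounded ℝ] fun w ↦ w ^ n := by
  simpa only [← Complex.ofReal_pow, Complex.isBigO_ofReal_left] using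
    isBigO_pow_pow_cobounded_of_le (R := ℝ) hmn

theorem rpow_isLittleO_rpow_atTop {p q : ℝ} (hpq : p < q) :
    (fun x : ℝ ↦ x ^ p) =o[atTop] fun x ↦ x ^ q := by
  refine isLittleO_of_tendsto' ?_ ?_
  · filter_upwards [eventually_gt_atTop 0] with x hx h
    exact absurd h (Real.rpow_pos_of_pos hx q).ne'
  · refine (tendsto_rpow_neg_atTop (sub_pos.mpr hpq)).congr' ?_
    filter_upwards [eventually_gt_atTop 0] with x hx
    rw [neg_sub, Real.rpow_sub hx]

theorem rpow_isLittleO_const_div_sq {p c : ℝ} (hp : p < -2) (hc : c ≠ 0) :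
    (fun x : ℝ ↦ x ^ p) =o[atTop] fun x ↦ c / x ^ 2 := by
  refine ((rpow_isLittleO_rpow_atTop hp).const_mul_right hc).congr' .rfl ?_
  filter_upwards [eventually_ge_atTop 0] with x hx
  rw [Real.rpow_neg hx, Real.rpow_two, div_eq_mul_inv]

theorem eventually_neg_of_add_isLittleO {ι : Type*} {l : Filter ι} {f g : ι → ℝ}
    (hg : ∀ᶠ x in l, 0 < g x) (h : (fun x ↦ f x + g x) =o[l] g) : ∀ᶠ x in l, f x < 0 := by
  filter_upwards [hg, h.bound one_half_pos] with x hgx hx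
  rw [Real.norm_of_nonneg hgx.le] at hx
  linarith [Real.le_norm_self (f x + g x)]

section

variable {σ : ℝ}

theorem abs_mul_sqrt_of_abs_eq_one (hσ : |σ| = 1) (x : ℝ) : |σ * √x| = √x := by
  rw [abs_mul, hσ, one_mul, abs_of_nonneg (Real.sqrt_nonneg x)]

theorem mul_sqrt_sq_of_abs_eq_one (hσ : |σ| = 1) {x : ℝ} (hx : 0 ≤ x) : (σ * √x) ^ 2 = x := by
  rw [← sq_abs, abs_mul_sqrt_of_abs_eq_one hσ, Real.sq_sqrt hx]

theorem tendsto_mul_sqrt_cobounded (hσ : |σ| = 1) :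
    Tendsto (fun x ↦ σ * √x) atTop (cobounded ℝ) :=
  tendsto_norm_atTop_iff_cobounded.mp <| by
    simpa only [Real.norm_eq_abs, abs_mul_sqrt_of_abs_eq_one hσ] using Real.tendsto_sqrt_atTop

theorem inv_mul_sqrt_pow_isBigO_rpow (hσ : |σ| = 1) (n : ℕ) :
    (fun x ↦ ((σ * √x) ^ n)⁻¹) =O[atTop] fun x ↦ x ^ (-n / 2 : ℝ) := by
  refine .of_norm_eventuallyLE ?_
  filter_upwards [eventually_ge_atTop 0] with x hx
  rw [norm_inv, norm_pow, Real.norm_eq_abs, abs_mul_sqrt_of_abs_eq_one hσ,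
    Real.rpow_div_two_eq_sqrt _ hx, Real.rpow_neg (Real.sqrt_nonneg x), Real.rpow_natCast]

end

/-- The modal characteristic polynomial `P_λ` of the linearized wave–MGT system on the Dirichlet
eigenspace with eigenvalue `λ = lam`; its roots are the modal characteristic roots. -/
noncomputable def modalPoly (τ b α lam : ℝ) : ℂ[X] :=
  (X ^ 2 + C (lam : ℂ)) * (C (τ : ℂ) * X ^ 3 + X ^ 2 + C (b * lam : ℂ) * X + C (lam : ℂ)) -
    C (α ^ 2 : ℂ) * (1 + C (τ : ℂ) * X)

section

variable (τ b α : ℝ)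

theorem eval_modalPoly (lam : ℝ) (s : ℂ) :
    (modalPoly τ b α lam).eval s =
      (s ^ 2 + lam) * (τ * s ^ 3 + s ^ 2 + b * lam * s + lam) - α ^ 2 * (1 + τ * s) := by
  simp only [modalPoly, eval_sub, eval_mul, eval_add, eval_pow, eval_X, eval_C, eval_one]

theorem natDegree_modalPoly_le (lam : ℝ) : (modalPoly τ b α lam).natDegree ≤ 5 := by
  rw [modalPoly]
  compute_degree

theorem eval_modalPoly_I_mul (w : ℝ) :
    (modalPoly τ b α (w ^ 2)).eval (I * w) = -(α ^ 2 * (1 + τ * (I * w))) := by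
  rw [eval_modalPoly, mul_pow, Complex.I_sq]
  push_cast
  ring

theorem eval_derivative_modalPoly_I_mul (w : ℝ) :
    (modalPoly τ b α (w ^ 2)).derivative.eval (I * w) =
      -(2 * (b - τ) * w ^ 4 + α ^ 2 * τ) := by
  simp only [modalPoly, derivative_sub, derivative_mul, derivative_add, derivative_X_pow,
    derivative_C, derivative_X, derivative_one, eval_sub, eval_mul, eval_add, eval_pow, eval_X,
    eval_C, eval_one, eval_zero]
  push_cast
  linear_combination (2 * τ * w ^ 4 * (I ^ 2 - 1) + 2 * I * w ^ 3 + 2 * b * w ^ 4 +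
    w ^ 2 * (3 * τ * I ^ 2 * w ^ 2 + 2 * I * w + b * w ^ 2)) * Complex.I_sq

theorem eval_modalPoly_I_mul_add (w : ℝ) (d : ℂ) :
    (modalPoly τ b α (w ^ 2)).eval (I * w + d) =
      (modalPoly τ b α (w ^ 2)).eval (I * w) +
        (modalPoly τ b α (w ^ 2)).derivative.eval (I * w) * d +
      (I * (b - τ) * w ^ 3 + (2 * I * w + d) *
        ((b - 3 * τ) * w ^ 2 + 2 * I * w + (3 * τ * I * w + 1) * d + τ * d ^ 2)) * d ^ 2 := by
  have hwave : (I * w + d) ^ 2 + (w : ℂ) ^ 2 = d * (2 * I * w + d) := by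
    linear_combination (w : ℂ) ^ 2 * Complex.I_sq
  have hcubic : τ * (I * w + d) ^ 3 + (I * w + d) ^ 2 + b * (w : ℂ) ^ 2 * (I * w + d) +
      (w : ℂ) ^ 2 = I * (b - τ) * w ^ 3 + d * ((b - 3 * τ) * w ^ 2 + 2 * I * w +
        (3 * τ * I * w + 1) * d + τ * d ^ 2) := by
    linear_combination (τ * I * (w : ℂ) ^ 3 + 3 * τ * (w : ℂ) ^ 2 * d + (w : ℂ) ^ 2) * Complex.I_sq
  rw [eval_modalPoly_I_mul, eval_derivative_modalPoly_I_mul, eval_modalPoly]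
  push_cast
  rw [hwave, hcubic]
  linear_combination 2 * (b - τ) * (w : ℂ) ^ 4 * d * Complex.I_sq

theorem modalPoly_taylor_isBigO {d : ℝ → ℂ} (hd : d =O[cobounded ℝ] fun _ ↦ (1 : ℝ)) :
    (fun w ↦ (modalPoly τ b α (w ^ 2)).eval (I * w + d w) -
        ((modalPoly τ b α (w ^ 2)).eval (I * w) +
          (modalPoly τ b α (w ^ 2)).derivative.eval (I * w) * d w)) =O[cobounded ℝ]
      fun w ↦ w ^ 3 * ‖d w‖ ^ 2 := by
  have hmono {m n : ℕ} (hmn : m ≤ n) (c : ℂ) :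
      (fun w : ℝ ↦ c * (w : ℂ) ^ m) =O[cobounded ℝ] fun w ↦ w ^ n :=
    (ofReal_pow_isBigO_pow_cobounded hmn).const_mul_left c
  have hquadratic : (fun w : ℝ ↦ 2 * I * w + d w) =O[cobounded ℝ] fun w ↦ w := by
    have hd_linear := hd.trans (isBigO_pow_pow_cobounded_of_le (R := ℝ) zero_le_one)
    simpa only [pow_one] using (hmono (le_refl 1) (2 * I)).add hd_linear
  have hcubic : (fun w : ℝ ↦ (b - 3 * τ) * (w : ℂ) ^ 2 + 2 * I * w + (3 * τ * I * w + 1) * d w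
      + τ * d w ^ 2) =O[cobounded ℝ] fun w ↦ w ^ 2 := by
    have hlinear := ((hmono one_le_two (3 * τ * I)).add (hmono zero_le_two 1)).mul hd
    have hsquare := (hmono zero_le_two τ).mul (hd.pow 2)
    simp only [pow_zero, pow_one, mul_one, one_pow] at hlinear hsquare
    simpa only [pow_one] using
      (((hmono le_rfl (b - 3 * τ)).add (hmono one_le_two (2 * I))).add hlinear).add hsquare
  have hcoeff := (hmono (le_refl 3) (I * (b - τ))).add
    ((hquadratic.mul hcubic).congr_right fun w ↦ (pow_succ' w 2).symm)
  refine (hcoeff.mul ((isBigO_refl d _).norm_right.pow 2)).congr_left fun w ↦ ?_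
  rw [eval_modalPoly_I_mul_add, add_sub_cancel_left]

theorem pow_four_isBigO_eval_derivative_modalPoly_I_mul (hb : b ≠ τ) :
    (fun w : ℝ ↦ w ^ 4) =O[cobounded ℝ]
      fun w ↦ (modalPoly τ b α (w ^ 2)).derivative.eval (I * w) := by
  have hc : 2 * (b - τ) ≠ 0 := mul_ne_zero two_ne_zero (sub_ne_zero.mpr hb)
  have hlead : (fun w : ℝ ↦ w ^ 4) =O[cobounded ℝ] fun w ↦ 2 * (b - τ) * w ^ 4 :=
    (isBigO_refl _ _).const_mul_right hc
  have hconst : (fun _ : ℝ ↦ α ^ 2 * τ) =o[cobounded ℝ] fun w ↦ 2 * (b - τ) * w ^ 4 := by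
    simpa only [pow_zero, mul_one] using
      ((isLittleO_pow_pow_cobounded_of_lt four_pos).const_mul_left (α ^ 2 * τ)).trans_isBigO hlead
  have hsum := hlead.trans hconst.right_isBigO_add'
  refine (Complex.isBigO_ofReal_right.mpr hsum.neg_right).congr_right fun w ↦ ?_
  rw [eval_derivative_modalPoly_I_mul]
  simp

theorem eval_modalPoly_I_mul_isBigO :
    (fun w : ℝ ↦ (modalPoly τ b α (w ^ 2)).eval (I * w)) =O[cobounded ℝ] fun w ↦ w := by
  have hreal := (ofReal_pow_isBigO_pow_cobounded zero_le_one).const_mul_left (α ^ 2 : ℂ)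
  have himag := (ofReal_pow_isBigO_pow_cobounded (le_refl 1)).const_mul_left (α ^ 2 * τ * I : ℂ)
  refine (hreal.add himag).neg_left.congr (fun w ↦ ?_) fun w ↦ pow_one w
  rw [eval_modalPoly_I_mul]
  ring

theorem exists_isRoot_modalPoly_sub_isBigO (hb : b ≠ τ) :
    ∃ s : ℝ → ℂ, (∀ᶠ w in cobounded ℝ, (modalPoly τ b α (w ^ 2)).IsRoot (s w)) ∧
      (fun w ↦ s w - I * w) =O[cobounded ℝ] fun w ↦ (w ^ 3)⁻¹ := by
  have hderiv := pow_four_isBigO_eval_derivative_modalPoly_I_mul τ b α hb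
  have hne := eventually_ne_cobounded (0 : ℝ)
  obtain ⟨s, hroot, hnear⟩ := exists_isRoot_sub_isBigO_eval_div_eval_derivative
    (fun w : ℝ ↦ IsAlgClosed.splits (modalPoly τ b α (w ^ 2)))
    (fun w ↦ natDegree_modalPoly_le τ b α (w ^ 2))
    (hne.mp (hderiv.eq_zero_imp.mono fun w hzero hw ↦ mt hzero (pow_ne_zero 4 hw)))
  have hinv := hderiv.inv_rev (hne.mono fun w hw h ↦ absurd h (pow_ne_zero 4 hw))
  have hquot := ((eval_modalPoly_I_mul_isBigO τ b α).mul hinv).congr_left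
    fun w ↦ (div_eq_mul_inv _ _).symm
  refine ⟨s, hroot, (hnear.trans hquot).congr' .rfl ?_⟩
  filter_upwards [hne] with w hw
  field_simp

variable {τ b α} {s : ℝ → ℂ}

theorem linearization_isBigO_of_isRoot
    (hroot : ∀ᶠ w in cobounded ℝ, (modalPoly τ b α (w ^ 2)).IsRoot (s w))
    (hnear : (fun w ↦ s w - I * w) =O[cobounded ℝ] fun w ↦ (w ^ 3)⁻¹) :
    (fun w : ℝ ↦ 2 * (b - τ) * (w : ℂ) ^ 4 * (s w - I * w) + α ^ 2 * (1 + τ * (I * w)))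
      =O[cobounded ℝ] fun w ↦ (w ^ 3)⁻¹ := by
  have hsmall : (fun w ↦ s w - I * w) =O[cobounded ℝ] fun _ ↦ (1 : ℝ) := by
    simpa only [pow_zero, inv_one] using
      hnear.trans ((isBigO_pow_pow_cobounded_of_le (R := ℝ) (Nat.zero_le 3)).inv_rev (by simp))
  have hquad : (fun w ↦ w ^ 3 * ‖s w - I * w‖ ^ 2) =O[cobounded ℝ] fun w ↦ (w ^ 3)⁻¹ := by
    refine ((isBigO_refl (· ^ 3) _).mul (hnear.norm_left.pow 2)).congr' .rfl ?_
    filter_upwards [eventually_ne_cobounded (0 : ℝ)] with w hw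
    field_simp
  have htaylor := (modalPoly_taylor_isBigO τ b α hsmall).trans hquad
  refine (htaylor.sub (hnear.const_mul_left (α ^ 2 * τ : ℂ))).congr' ?_ .rfl
  filter_upwards [hroot] with w hw
  rw [add_sub_cancel, hw.eq_zero, eval_modalPoly_I_mul, eval_derivative_modalPoly_I_mul]
  ring

theorem re_add_div_isBigO_of_isRoot (hb : b ≠ τ)
    (hroot : ∀ᶠ w in cobounded ℝ, (modalPoly τ b α (w ^ 2)).IsRoot (s w))
    (hnear : (fun w ↦ s w - I * w) =O[cobounded ℝ] fun w ↦ (w ^ 3)⁻¹) :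
    (fun w ↦ (s w).re + α ^ 2 / (2 * (b - τ) * w ^ 4)) =O[cobounded ℝ] fun w ↦ (w ^ 7)⁻¹ := by
  have hb' : b - τ ≠ 0 := sub_ne_zero.mpr hb
  have hproj (w : ℝ) :
      2 * (b - τ) * w ^ 4 * (s w).re + α ^ 2 =
        (2 * (b - τ) * (w : ℂ) ^ 4 * (s w - I * w) + α ^ 2 * (1 + τ * (I * w))).re := by
    have hcast : 2 * (b - τ) * (w : ℂ) ^ 4 * (s w - I * w) + α ^ 2 * (1 + τ * (I * w)) =
        (2 * (b - τ) * w ^ 4 : ℝ) * (s w - I * w) + (α ^ 2 : ℝ) * (1 + (τ * w : ℝ) * I) := by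
      push_cast
      ring
    rw [hcast, Complex.add_re, Complex.re_ofReal_mul, Complex.re_ofReal_mul]
    simp
  have hre : (fun w ↦ 2 * (b - τ) * w ^ 4 * (s w).re + α ^ 2) =O[cobounded ℝ]
      fun w ↦ (w ^ 3)⁻¹ := by
    refine (isBigO_of_le _ fun w ↦ ?_).trans (linearization_isBigO_of_isRoot hroot hnear)
    rw [hproj]
    exact Complex.abs_re_le_norm _
  refine (hre.mul ((isBigO_refl (fun w : ℝ ↦ (w ^ 4)⁻¹) _).const_mul_left
    (2 * (b - τ))⁻¹)).congr' ?_ ?_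
  · filter_upwards [eventually_ne_cobounded (0 : ℝ)] with w hw
    field_simp
  · filter_upwards with w
    ring

end

theorem stmt_18_general {τ b α σ : ℝ} (hb : τ < b) (hα : α ≠ 0) (hσ : σ = 1 ∨ σ = -1) :
    ∃ s : ℝ → ℂ, (∀ᶠ lam in atTop, (modalPoly τ b α lam).IsRoot (s lam)) ∧
      (fun lam ↦ s lam - I * (σ * √lam)) =O[atTop] (fun lam ↦ lam ^ (-3 / 2 : ℝ)) ∧
      (fun lam ↦ (s lam).re + α ^ 2 / (2 * (b - τ) * lam ^ 2)) =O[atTop]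
        (fun lam ↦ lam ^ (-7 / 2 : ℝ)) ∧
      ∀ᶠ lam in atTop, (s lam).re < 0 := by
  replace hσ : |σ| = 1 := (abs_eq zero_le_one).mpr hσ
  have hfreq := tendsto_mul_sqrt_cobounded hσ
  obtain ⟨s, hroot, hnear⟩ := exists_isRoot_modalPoly_sub_isBigO τ b α hb.ne'
  have hre : (fun lam ↦ (s (σ * √lam)).re + α ^ 2 / (2 * (b - τ) * lam ^ 2)) =O[atTop]
      fun lam ↦ lam ^ (-7 / 2 : ℝ) := by
    refine (((re_add_div_isBigO_of_isRoot hb.ne' hroot hnear).comp_tendsto hfreq).trans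
      (inv_mul_sqrt_pow_isBigO_rpow hσ 7)).congr' ?_ .rfl
    filter_upwards [eventually_ge_atTop 0] with lam hlam
    rw [Function.comp_apply, pow_mul _ 2 2, mul_sqrt_sq_of_abs_eq_one hσ hlam]
  refine ⟨fun lam ↦ s (σ * √lam), ?_, ?_, hre, ?_⟩
  · filter_upwards [hfreq.eventually hroot, eventually_ge_atTop 0] with lam h hlam
    rwa [mul_sqrt_sq_of_abs_eq_one hσ hlam] at h
  · simpa only [Function.comp_def, Complex.ofReal_mul, Nat.cast_ofNat] using
      (hnear.comp_tendsto hfreq).trans (inv_mul_sqrt_pow_isBigO_rpow hσ 3)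
  · have hc : 0 < α ^ 2 / (2 * (b - τ)) := by
      have := sub_pos.mpr hb
      positivity
    simp only [← div_div (α ^ 2) (2 * (b - τ))] at hre
    refine eventually_neg_of_add_isLittleO ?_
      (hre.trans_isLittleO (rpow_isLittleO_const_div_sq (by norm_num) hc.ne'))
    filter_upwards [eventually_gt_atTop 0] with lam hlam
    positivity

/-- Absence of a uniform spectral gap: for b > τ > 0, α ≠ 0, σ = ±1, there are C, Λ > 0
such that for every λ ≥ Λ the polynomial
P_λ(s) = (s² + λ)(τs³ + s² + bλs + λ) − α²(1 + τs) has a root s with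
|Re s + α²/(2(b−τ)λ²)| ≤ C λ^{−5/2} and Re s < 0. -/
theorem stmt_18 (τ b α σ : ℝ) (hτ : 0 < τ) (hb : τ < b) (hα : α ≠ 0)
    (hσ : σ = 1 ∨ σ = -1) (P : ℝ → ℂ → ℂ)
    (hP : ∀ lam : ℝ, 0 < lam → ∀ s : ℂ, P lam s =
      (s ^ 2 + (lam : ℂ)) *
        ((τ : ℂ) * s ^ 3 + s ^ 2 + (b : ℂ) * (lam : ℂ) * s + (lam : ℂ)) -
      (α : ℂ) ^ 2 * (1 + (τ : ℂ) * s)) :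
    ∃ C Λ : ℝ, 0 < C ∧ 0 < Λ ∧ ∀ lam : ℝ, Λ ≤ lam →
      ∃ s : ℂ, P lam s = 0 ∧
        |s.re + α ^ 2 / (2 * (b - τ) * lam ^ 2)| ≤ C * lam ^ (-(5 : ℝ) / 2) ∧
        s.re < 0 := by
  obtain ⟨s, hroot, -, hre, hneg⟩ := stmt_18_general hb hα hσ
  obtain ⟨C, hC, hbound⟩ :=
    (hre.trans (rpow_isLittleO_rpow_atTop (q := -5 / 2) (by norm_num)).isBigO).exists_pos
  obtain ⟨Λ, hΛ, h⟩ := (atTop_basis' (1 : ℝ)).eventually_iff.mp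
    (hroot.and (hbound.bound.and hneg))
  refine ⟨C, Λ, hC, one_pos.trans_le hΛ, fun lam hlam ↦ ?_⟩
  have hlam0 : 0 < lam := by linarith
  obtain ⟨hsroot, hsbound, hsneg⟩ := h hlam
  refine ⟨s lam, ?_, ?_, hsneg⟩
  · rw [hP lam hlam0, ← eval_modalPoly, hsroot.eq_zero]
  · rwa [Real.norm_eq_abs, Real.norm_of_nonneg (Real.rpow_nonneg hlam0.le _)] at hsbound
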